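/- Let K be a field with a discrete valuation v, valuation ring O_v = {x ∈ K : x = 0 or v(x) ≥ 0}, maximal ideal m_v = {x ∈ K : x = 0 or v(x) > 0}, and residue field k_v = O_v/m_v. Let π, α, b, c ∈ K with v(π) odd, v(α) = v(b) = v(c) = 0, and suppose the image of α in k_v is not a square in k_v. Then there are no y, z ∈ K satisfying y² = π⁻³(z² − α)(z² − α − πb)(z² − α − πc). -/

import Mathlib

section IntegerValuation

variable {K : Type*} [Field K] {v : K → ℤ}

theorem val_neg_of_map_mul
    (hmul : ∀ x y : K, x ≠ 0 → y ≠ 0 → v (x * y) = v x + v y) {x : K} (hx : x ≠ 0) :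
    v (-x) = v x := by
  have h₁ := hmul (-x) (-x) (neg_ne_zero.mpr hx) (neg_ne_zero.mpr hx)
  rw [neg_mul_neg, hmul x x hx hx] at h₁
  lia

theorem val_add_eq_left_of_lt
    (hmul : ∀ x y : K, x ≠ 0 → y ≠ 0 → v (x * y) = v x + v y)
    (hultra : ∀ x y : K, x ≠ 0 → y ≠ 0 → x + y ≠ 0 → min (v x) (v y) ≤ v (x + y))
    {x y : K} (hx : x ≠ 0) (hy : y ≠ 0) (hlt : v x < v y) :
    x + y ≠ 0 ∧ v (x + y) = v x := by
  have hne : x + y ≠ 0 := by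
    intro h
    rw [eq_neg_of_add_eq_zero_left h, val_neg_of_map_mul hmul hy] at hlt
    exact lt_irrefl _ hlt
  have hle := hultra x y hx hy hne
  have hge := hultra (x + y) (-y) hne (neg_ne_zero.mpr hy) (by simpa using hx)
  rw [add_neg_cancel_right, val_neg_of_map_mul hmul hy] at hge
  exact ⟨hne, by lia⟩

theorem val_sub_eq_min_of_ne
    (hmul : ∀ x y : K, x ≠ 0 → y ≠ 0 → v (x * y) = v x + v y)
    (hultra : ∀ x y : K, x ≠ 0 → y ≠ 0 → x + y ≠ 0 → min (v x) (v y) ≤ v (x + y))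
    {x y : K} (hx : x ≠ 0) (hy : y ≠ 0) (hne : v x ≠ v y) :
    x - y ≠ 0 ∧ v (x - y) = min (v x) (v y) := by
  have hy' := neg_ne_zero.mpr hy
  have hneg := val_neg_of_map_mul hmul hy
  rw [sub_eq_add_neg]
  rcases lt_or_gt_of_ne hne with h | h
  · rw [min_eq_left h.le]
    exact val_add_eq_left_of_lt hmul hultra hx hy' (hneg ▸ h)
  · rw [min_eq_right h.le, add_comm x, ← hneg]
    exact val_add_eq_left_of_lt hmul hultra hy' hx (hneg.symm ▸ h)

/-- If the unit `α` is not a square in the residue field, then `z ^ 2 - α` is nonzero and has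
even valuation for every `z`. -/
theorem even_val_sq_sub_of_residue_not_square
    (hmul : ∀ x y : K, x ≠ 0 → y ≠ 0 → v (x * y) = v x + v y)
    (hultra : ∀ x y : K, x ≠ 0 → y ≠ 0 → x + y ≠ 0 → min (v x) (v y) ≤ v (x + y))
    {α : K} (hα : α ≠ 0) (hvα : v α = 0)
    (hns : ¬ ∃ t : K, (t = 0 ∨ 0 ≤ v t) ∧ (α - t ^ 2 = 0 ∨ 0 < v (α - t ^ 2))) (z : K) :
    z ^ 2 - α ≠ 0 ∧ Even (v (z ^ 2 - α)) := by
  rcases eq_or_ne z 0 with rfl | hz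
  · simp [hα, val_neg_of_map_mul hmul hα, hvα]
  have hz₂ : z ^ 2 ≠ 0 := pow_ne_zero 2 hz
  have hvz₂ : v (z ^ 2) = v z + v z := by rw [sq, hmul z z hz hz]
  rcases lt_or_ge (v z) 0 with hneg | hnonneg
  · obtain ⟨hne, hval⟩ := val_sub_eq_min_of_ne hmul hultra hz₂ hα (by lia)
    exact ⟨hne, v z, by lia⟩
  · have hnot : ¬ (α - z ^ 2 = 0 ∨ 0 < v (α - z ^ 2)) := fun h => hns ⟨z, Or.inr hnonneg, h⟩
    push Not at hnot
    obtain ⟨hne, hle⟩ := hnot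
    have hge := hultra α (-z ^ 2) hα (neg_ne_zero.mpr hz₂) (by rwa [← sub_eq_add_neg])
    rw [← sub_eq_add_neg, val_neg_of_map_mul hmul hz₂] at hge
    rw [← neg_sub α, val_neg_of_map_mul hmul hne]
    exact ⟨neg_ne_zero.mpr hne, 0, by lia⟩

end IntegerValuation

/-- Let `K` be a field with a discrete valuation `v` (a surjective
homomorphism `Kˣ → ℤ`, here encoded as a function on nonzero elements of `K`, satisfying
the ultrametric inequality), with valuation ring `O_v = {x : x = 0 ∨ v x ≥ 0}` and
maximal ideal `m_v = {x : x = 0 ∨ v x > 0}`. Let `π, α, b, c ∈ K` with `v π` odd,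
`v α = v b = v c = 0`, and suppose the image of `α` in the residue field `O_v/m_v` is not
a square (i.e. there is no `t ∈ O_v` with `α - t² ∈ m_v`). Then no `y, z ∈ K` satisfy
`y² = π⁻³(z² − α)(z² − α − πb)(z² − α − πc)`. -/
theorem no_points_at_pi_odd_val (K : Type*) [Field K] (v : K → ℤ)
    (hmul : ∀ x y : K, x ≠ 0 → y ≠ 0 → v (x * y) = v x + v y)
    (hsurj : ∀ n : ℤ, ∃ x : K, x ≠ 0 ∧ v x = n)
    (hultra : ∀ x y : K, x ≠ 0 → y ≠ 0 → x + y ≠ 0 → min (v x) (v y) ≤ v (x + y))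
    (π α b c : K) (hπ : π ≠ 0) (hα : α ≠ 0) (hb : b ≠ 0) (hc : c ≠ 0)
    (hvπ : Odd (v π)) (hvα : v α = 0) (hvb : v b = 0) (hvc : v c = 0)
    (hns : ¬ ∃ t : K, (t = 0 ∨ 0 ≤ v t) ∧ (α - t ^ 2 = 0 ∨ 0 < v (α - t ^ 2))) :
    ¬ ∃ y z : K,
      y ^ 2 = π⁻¹ ^ 3 * ((z ^ 2 - α) * (z ^ 2 - α - π * b) * (z ^ 2 - α - π * c)) := by
  rintro ⟨y, z, h⟩
  obtain ⟨hw, hwe⟩ := even_val_sq_sub_of_residue_not_square hmul hultra hα hvα hns z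
  set w := z ^ 2 - α
  have hsub : ∀ d : K, d ≠ 0 → v d = 0 →
      w - π * d ≠ 0 ∧ v (w - π * d) = min (v w) (v π) := by
    intro d hd hvd
    have hvπd : v (π * d) = v π := by rw [hmul π d hπ hd, hvd, add_zero]
    rw [← hvπd]
    refine val_sub_eq_min_of_ne hmul hultra hw (mul_ne_zero hπ hd) fun he => ?_
    rw [he, hvπd] at hwe
    exact Int.not_even_iff_odd.mpr hvπ hwe
  obtain ⟨hwb, hvwb⟩ := hsub b hb hvb
  obtain ⟨hwc, hvwc⟩ := hsub c hc hvc
  have heq : (π * y) * (π * y) * π = w * (w - π * b) * (w - π * c) := by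
    calc (π * y) * (π * y) * π = π ^ 3 * y ^ 2 := by ring
      _ = w * (w - π * b) * (w - π * c) := by rw [h]; field_simp
  have hy : y ≠ 0 := by
    rintro rfl
    exact mul_ne_zero (mul_ne_zero hw hwb) hwc (by rw [← heq]; ring)
  have hπy := mul_ne_zero hπ hy
  have hval := congrArg v heq
  rw [hmul _ _ (mul_ne_zero hπy hπy) hπ, hmul _ _ hπy hπy,
    hmul _ _ (mul_ne_zero hw hwb) hwc, hmul _ _ hw hwb, hvwb, hvwc] at hval
  obtain ⟨m, hm⟩ := hwe
  obtain ⟨n, hn⟩ := hvπ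
  lia
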